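/- arXiv:1707.06157 — 4 statements merged into one kernel-verified Lean document; each statement's English description precedes it below -/
import Mathlib

section
/- Let ι be a nonempty finite index set, let c : ι → ℝ and d : ι → ℝ be functions with c(i) > 0 and d(i) > 0 for all i, and suppose i* ∈ ι satisfies d(i*) < d(i) for all i ≠ i*. Then lim_{σ → 0⁺} [ c(i*)·Q(d(i*)/(2σ)) ] / [ Σ_{i∈ι} c(i)·Q(d(i)/(2σ)) ] = 1. -/
open Filter

/-- The Gaussian tail function `Q(x) = ∫_x^∞ (1/√(2π)) e^{−t²/2} dt`. -/
noncomputable def gaussQ (x : ℝ) : ℝ :=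
  ∫ t in Set.Ioi x, (1 / Real.sqrt (2 * Real.pi)) * Real.exp (-t ^ 2 / 2)

lemma gaussQ_integrable :
    MeasureTheory.Integrable
      (fun t : ℝ => (1 / Real.sqrt (2 * Real.pi)) * Real.exp (-t ^ 2 / 2)) := by
  have h := (integrable_exp_neg_mul_sq (b := 1 / 2) (by norm_num)).const_mul
    (1 / Real.sqrt (2 * Real.pi))
  refine h.congr (Filter.Eventually.of_forall fun t => ?_)
  simp only
  congr 2
  ring

lemma gaussQ_pos (x : ℝ) : 0 < gaussQ x := by
  unfold gaussQ
  rw [MeasureTheory.setIntegral_pos_iff_support_of_nonneg_ae]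
  · have : Function.support
        (fun t : ℝ => (1 / Real.sqrt (2 * Real.pi)) * Real.exp (-t ^ 2 / 2)) = Set.univ := by
      ext t
      simp only [Function.mem_support, Set.mem_univ, iff_true]
      have := Real.pi_pos
      positivity
    rw [this]
    simp
  · exact Filter.Eventually.of_forall fun t => by simp only [Pi.zero_apply]; positivity
  · exact gaussQ_integrable.integrableOn

lemma gaussQ_add_le (x h : ℝ) (hh : 0 ≤ h) :
    gaussQ (x + h) ≤ Real.exp (-(x * h)) * gaussQ x := by
  have e : gaussQ (x + h) = ∫ t in Set.Ioi x,
      (1 / Real.sqrt (2 * Real.pi)) * Real.exp (-(t + h) ^ 2 / 2) := by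
    unfold gaussQ
    have := (MeasureTheory.measurePreserving_add_right MeasureTheory.volume h).setIntegral_preimage_emb
      (measurableEmbedding_addRight h)
      (fun t : ℝ => (1 / Real.sqrt (2 * Real.pi)) * Real.exp (-t ^ 2 / 2)) (Set.Ioi (x + h))
    rw [← this, Set.preimage_add_const_Ioi, add_sub_cancel_right]
  rw [e]
  unfold gaussQ
  rw [← MeasureTheory.integral_const_mul]
  refine MeasureTheory.setIntegral_mono_on
    (gaussQ_integrable.comp_add_right h).integrableOn
    (gaussQ_integrable.const_mul _).integrableOn measurableSet_Ioi fun t ht => ?_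
  rw [mul_left_comm, ← Real.exp_add]
  have ht' : x < t := ht
  gcongr
  nlinarith [mul_nonneg (sub_nonneg.2 ht'.le) hh]

lemma gaussQ_ratio_tendsto (a b : ℝ) (ha : 0 < a) (hab : a < b) :
    Tendsto (fun σ : ℝ => gaussQ (b / (2 * σ)) / gaussQ (a / (2 * σ)))
      (nhdsWithin 0 (Set.Ioi 0)) (nhds 0) := by
  have hinv : Tendsto (fun σ : ℝ => σ⁻¹) (nhdsWithin 0 (Set.Ioi 0)) atTop :=
    tendsto_inv_nhdsGT_zero
  have hC : 0 < a * (b - a) / 4 := by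
    have := sub_pos.2 hab
    positivity
  have hlim : Tendsto (fun σ : ℝ => Real.exp (-(a * (b - a) / 4 * (σ⁻¹ * σ⁻¹))))
      (nhdsWithin 0 (Set.Ioi 0)) (nhds 0) :=
    Real.tendsto_exp_neg_atTop_nhds_zero.comp
      ((hinv.atTop_mul_atTop₀ hinv).const_mul_atTop hC)
  refine squeeze_zero' (Filter.Eventually.of_forall fun σ =>
    (div_pos (gaussQ_pos _) (gaussQ_pos _)).le) ?_ hlim
  filter_upwards [self_mem_nhdsWithin] with σ hσ
  have hσ' : 0 < σ := hσ
  rw [div_le_iff₀ (gaussQ_pos _)]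
  have h1 := gaussQ_add_le (a / (2 * σ)) ((b - a) / (2 * σ))
    (div_nonneg (sub_pos.2 hab).le (by positivity))
  have e1 : a / (2 * σ) + (b - a) / (2 * σ) = b / (2 * σ) := by ring
  have e2 : a / (2 * σ) * ((b - a) / (2 * σ)) = a * (b - a) / 4 * (σ⁻¹ * σ⁻¹) := by
    field_simp
    ring
  rwa [e1, e2] at h1

/-- High-SNR dominance of the minimum-distance term of a union bound: if `d i⋆ < d i`
for all `i ≠ i⋆`, then `c i⋆·Q(d i⋆/(2σ)) / Σ_i c i·Q(d i/(2σ)) → 1` as `σ → 0⁺`. -/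
theorem stmt_7 {ι : Type*} [Fintype ι] [Nonempty ι] (c d : ι → ℝ)
    (hc : ∀ i, 0 < c i) (hd : ∀ i, 0 < d i) (istar : ι)
    (hmin : ∀ i, i ≠ istar → d istar < d i) :
    Tendsto
      (fun σ : ℝ =>
        c istar * gaussQ (d istar / (2 * σ)) / ∑ i, c i * gaussQ (d i / (2 * σ)))
      (nhdsWithin 0 (Set.Ioi 0)) (nhds 1) := by
  classical
  have hs : Tendsto (fun σ : ℝ =>
      ∑ i, c i * (gaussQ (d i / (2 * σ)) / gaussQ (d istar / (2 * σ))))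
      (nhdsWithin 0 (Set.Ioi 0)) (nhds (∑ i, c i * (if i = istar then 1 else 0))) := by
    refine tendsto_finsetSum _ fun i _ => Tendsto.const_mul _ ?_
    by_cases h : i = istar
    · subst h
      simp [div_self (gaussQ_pos _).ne']
    · simp only [h, if_false]
      exact gaussQ_ratio_tendsto _ _ (hd _) (hmin i h)
  simp only [mul_ite, mul_one, mul_zero, Finset.sum_ite_eq', Finset.mem_univ, if_true] at hs
  have h := (tendsto_const_nhds (x := c istar)).div hs (hc istar).ne'
  rw [div_self (hc istar).ne'] at h
  refine h.congr fun σ => ?_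
  have hq := (gaussQ_pos (d istar / (2 * σ))).ne'
  simp only [Pi.div_apply, ← mul_div_assoc]
  rw [← Finset.sum_div, div_div_eq_mul_div]
end

section
/- Let σ > 0, let 0 < p < 1, and let 0 < d2max ≤ d1max. Then sup { 1 − Q(d2/(2σ)) − p·Q((d1 − d2)/(2σ)) : 0 < d2 < d1 ≤ d1max, d2 ≤ d2max } ≥ sup { 1 − Q(d1/(2σ)) − p·Q((d2 − d1)/(2σ)) : 0 < d1 < d2 ≤ d2max }. -/
/-- The maximal high-SNR correct-decoding probability of Case II cannot exceed that of
Case I when `d2max ≤ d1max`. -/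
theorem stmt_10 (σ p d1max d2max : ℝ) (hσ : 0 < σ) (hp : 0 < p) (hp1 : p < 1)
    (h2 : 0 < d2max) (h12 : d2max ≤ d1max) :
    sSup {x : ℝ | ∃ d1 d2 : ℝ, 0 < d2 ∧ d2 < d1 ∧ d1 ≤ d1max ∧ d2 ≤ d2max ∧
        x = 1 - gaussQ (d2 / (2 * σ)) - p * gaussQ ((d1 - d2) / (2 * σ))}
      ≥ sSup {x : ℝ | ∃ d1 d2 : ℝ, 0 < d1 ∧ d1 < d2 ∧ d2 ≤ d2max ∧
          x = 1 - gaussQ (d1 / (2 * σ)) - p * gaussQ ((d2 - d1) / (2 * σ))} := by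
  have hQ : ∀ x, 0 ≤ gaussQ x := fun x => by
    unfold gaussQ
    exact MeasureTheory.integral_nonneg fun t => by positivity
  refine csSup_le_csSup ?_ ?_ ?_
  · refine ⟨1, ?_⟩
    rintro x ⟨d1, d2, -, -, -, -, rfl⟩
    have h₁ := hQ (d2 / (2 * σ))
    have h₂ := mul_nonneg hp.le (hQ ((d1 - d2) / (2 * σ)))
    linarith
  · exact ⟨_, d2max / 2, d2max, by linarith, by linarith, le_refl _, rfl⟩
  · rintro x ⟨d1, d2, h1, hlt, hle, rfl⟩
    exact ⟨d2, d1, h1, hlt, by linarith, by linarith, rfl⟩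
end

section
/- Let σ > 0, 0 < p < 1, and 0 < d2max ≤ d1max. Define f(d2) = 1 − Q(d2/(2σ)) − p·Q((d1max − d2)/(2σ)) and d2* = d1max/2 − (4σ²/d1max)·ln p. Then d2* > 0, and f attains its maximum over the interval (0, d2max] at the point min(d2*, d2max); that is, f(min(d2*, d2max)) ≥ f(d2) for all d2 ∈ (0, d2max]. -/
lemma gaussQ_hasDerivAt (x : ℝ) :
    HasDerivAt gaussQ (-((1 / Real.sqrt (2 * Real.pi)) * Real.exp (-x ^ 2 / 2))) x := by
  have hc : Continuous (fun t : ℝ => (1 / Real.sqrt (2 * Real.pi)) * Real.exp (-t ^ 2 / 2)) := by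
    fun_prop
  have hi : MeasureTheory.Integrable
      (fun t : ℝ => (1 / Real.sqrt (2 * Real.pi)) * Real.exp (-t ^ 2 / 2)) := by
    have h := (integrable_exp_neg_mul_sq (b := 1 / 2) (by norm_num)).const_mul
      (1 / Real.sqrt (2 * Real.pi))
    refine h.congr (Filter.Eventually.of_forall fun t => ?_)
    simp only
    congr 2
    ring
  have he : gaussQ = fun x => gaussQ 0 -
      ∫ t in (0 : ℝ)..x, (1 / Real.sqrt (2 * Real.pi)) * Real.exp (-t ^ 2 / 2) := by
    funext y
    have := intervalIntegral.integral_interval_add_Ioi (a := 0) (b := y)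
      hi.integrableOn hi.integrableOn
    unfold gaussQ
    linarith
  rw [he]
  exact (intervalIntegral.integral_hasDerivAt_right (hc.intervalIntegrable _ _)
    (hc.stronglyMeasurableAtFilter _ _) hc.continuousAt).const_sub _

lemma obj_hasDerivAt (σ p d x : ℝ) :
    HasDerivAt (fun x => 1 - gaussQ (x / (2 * σ)) - p * gaussQ ((d - x) / (2 * σ)))
      ((1 / Real.sqrt (2 * Real.pi)) / (2 * σ) *
        (Real.exp (-(x / (2 * σ)) ^ 2 / 2) - p * Real.exp (-((d - x) / (2 * σ)) ^ 2 / 2))) x := by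
  have h1 := (gaussQ_hasDerivAt (x / (2 * σ))).comp x ((hasDerivAt_id x).div_const (2 * σ))
  have h2 := (gaussQ_hasDerivAt ((d - x) / (2 * σ))).comp x
    (((hasDerivAt_id x).const_sub d).div_const (2 * σ))
  refine ((h1.const_sub 1).sub (h2.const_mul p)).congr_deriv ?_
  ring

lemma expo_diff (σ p d x : ℝ) (hσ : 0 < σ) (hd : 0 < d) :
    -(x / (2 * σ)) ^ 2 / 2 - (Real.log p + -((d - x) / (2 * σ)) ^ 2 / 2)
      = d / (4 * σ ^ 2) * ((d / 2 - (4 * σ ^ 2 / d) * Real.log p) - x) := by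
  field_simp
  ring

/-- With `f(d2) = 1 − Q(d2/(2σ)) − p·Q((d1max − d2)/(2σ))` and
`d2* = d1max/2 − (4σ²/d1max)·ln p`, we have `d2* > 0` and `f` attains its maximum over
`(0, d2max]` at `min(d2*, d2max)`. -/
theorem stmt_15 (σ p d1max d2max : ℝ) (hσ : 0 < σ) (hp : 0 < p) (hp1 : p < 1)
    (h2 : 0 < d2max) (h12 : d2max ≤ d1max) :
    0 < d1max / 2 - (4 * σ ^ 2 / d1max) * Real.log p ∧
    ∀ d2 ∈ Set.Ioc (0 : ℝ) d2max,
      1 - gaussQ (d2 / (2 * σ)) - p * gaussQ ((d1max - d2) / (2 * σ))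
        ≤ 1 - gaussQ (min (d1max / 2 - (4 * σ ^ 2 / d1max) * Real.log p) d2max / (2 * σ))
          - p * gaussQ ((d1max -
              min (d1max / 2 - (4 * σ ^ 2 / d1max) * Real.log p) d2max) / (2 * σ)) := by
  have hd : 0 < d1max := h2.trans_le h12
  have hlog : Real.log p < 0 := Real.log_neg hp hp1
  have hpos : 0 < d1max / 2 - (4 * σ ^ 2 / d1max) * Real.log p := by
    have : 0 < (4 * σ ^ 2 / d1max) * (-Real.log p) :=
      mul_pos (by positivity) (by linarith)
    linarith
  refine ⟨hpos, ?_⟩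
  have hexp : ∀ x, p * Real.exp (-((d1max - x) / (2 * σ)) ^ 2 / 2) =
      Real.exp (Real.log p + -((d1max - x) / (2 * σ)) ^ 2 / 2) := by
    intro x
    rw [Real.exp_add, Real.exp_log hp]
  have hdiff := expo_diff σ p d1max (hσ := hσ) (hd := hd)
  set s := d1max / 2 - (4 * σ ^ 2 / d1max) * Real.log p with hs
  have hk : 0 < d1max / (4 * σ ^ 2) := by positivity
  have hder := obj_hasDerivAt σ p d1max
  set f : ℝ → ℝ := fun x => 1 - gaussQ (x / (2 * σ)) - p * gaussQ ((d1max - x) / (2 * σ)) with hf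
  have hcont : Continuous f := continuous_iff_continuousAt.2 fun x => (hder x).continuousAt
  have hmono : MonotoneOn f (Set.Iic s) := by
    refine monotoneOn_of_deriv_nonneg (convex_Iic s) hcont.continuousOn
      (fun x _ => (hder x).differentiableAt.differentiableWithinAt) fun x hx => ?_
    rw [interior_Iic] at hx
    rw [(hder x).deriv, hexp]
    refine mul_nonneg (by positivity) (sub_nonneg.2 (Real.exp_le_exp.2 ?_))
    have := mul_nonneg hk.le (sub_nonneg.2 (le_of_lt hx))
    linarith [hdiff x]
  have hanti : AntitoneOn f (Set.Ici s) := by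
    refine antitoneOn_of_deriv_nonpos (convex_Ici s) hcont.continuousOn
      (fun x _ => (hder x).differentiableAt.differentiableWithinAt) fun x hx => ?_
    rw [interior_Ici] at hx
    rw [(hder x).deriv, hexp]
    refine mul_nonpos_of_nonneg_of_nonpos (by positivity) (sub_nonpos.2 (Real.exp_le_exp.2 ?_))
    have := mul_nonneg hk.le (sub_nonneg.2 (le_of_lt hx))
    linarith [hdiff x]
  rintro y ⟨_, hy⟩
  change f y ≤ f (min s d2max)
  rcases le_total y s with h | h
  · exact hmono h (Set.mem_Iic.2 (min_le_left _ _)) (le_min h hy)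
  · rw [min_eq_left (h.trans hy)]
    exact hanti Set.self_mem_Ici h h
end

section
/- Let ψ ∈ (0, π/2), let 0 < d2max ≤ d1max, and define F(d1, d2) = min( d1², min( d2², d1² + d2² − 2·d1·d2·cos ψ ) ) on the domain D = { (d1, d2) : 0 < d1 ≤ d1max, 0 < d2 ≤ d2max }. Set t = d1max/(2 cos ψ). If d1max² + d2max² − 2·d1max·d2max·cos ψ ≤ t² and t² ≤ d2max², then F attains its maximum over D at the point (d1max, t); otherwise F attains its maximum over D at (d1max, d2max). -/
/-- The squared minimum distance among the dominant union-bound terms: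
`F(d1, d2) = min(d1², min(d2², d1² + d2² − 2·d1·d2·cos ψ))`. -/
noncomputable def minSqDist (ψ d1 d2 : ℝ) : ℝ :=
  min (d1 ^ 2) (min (d2 ^ 2) (d1 ^ 2 + d2 ^ 2 - 2 * d1 * d2 * Real.cos ψ))

lemma cvx (a b x p q M : ℝ) (ha : a ≤ x) (hb : x ≤ b)
    (h1 : a ^ 2 - p * a + q ≤ M) (h2 : b ^ 2 - p * b + q ≤ M) : x ^ 2 - p * x + q ≤ M := by
  rcases eq_or_lt_of_le (ha.trans hb) with h | h
  · have : x = a := by linarith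
    subst this; exact h1
  · have e : (b - a) * (M - (x ^ 2 - p * x + q)) = (b - x) * (M - (a ^ 2 - p * a + q))
        + (x - a) * (M - (b ^ 2 - p * b + q)) + (b - a) * ((x - a) * (b - x)) := by ring
    have e2 : 0 ≤ (b - a) * (M - (x ^ 2 - p * x + q)) := by
      rw [e]
      have := mul_nonneg (sub_nonneg.2 hb) (sub_nonneg.2 h1)
      have := mul_nonneg (sub_nonneg.2 ha) (sub_nonneg.2 h2)
      have := mul_nonneg (sub_pos.2 h).le (mul_nonneg (sub_nonneg.2 ha) (sub_nonneg.2 hb))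
      linarith
    have := nonneg_of_mul_nonneg_right e2 (sub_pos.2 h)
    linarith

lemma key (ψ A B t M d1 d2 : ℝ) (ht : 0 < t) (hA : A = 2 * Real.cos ψ * t)
    (htB : t ≤ B) (hBA : B ≤ A) (hM : t ^ 2 ≤ M)
    (hM2 : A ^ 2 + B ^ 2 - 2 * A * B * Real.cos ψ ≤ M)
    (h1 : 0 < d1) (h1' : d1 ≤ A) (h2 : 0 < d2) (h2' : d2 ≤ B) : minSqDist ψ d1 d2 ≤ M := by
  unfold minSqDist
  generalize Real.cos ψ = c at *
  rcases le_total d1 t with h | h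
  · exact (min_le_left _ _).trans (le_trans (by gcongr) hM)
  rcases le_total d2 t with h' | h'
  · exact (min_le_right _ _).trans ((min_le_left _ _).trans (le_trans (by gcongr) hM))
  refine (min_le_right _ _).trans ((min_le_right _ _).trans ?_)
  have hc : t * t ≤ A * t := by nlinarith
  have v1 : t ^ 2 + t ^ 2 - 2 * t * t * c ≤ M := by subst hA; nlinarith
  have v2 : A ^ 2 + t ^ 2 - 2 * A * t * c ≤ M := by subst hA; nlinarith
  have v3 : t ^ 2 + B ^ 2 - 2 * t * B * c ≤ M := by
    have : B * B ≤ A * B := by nlinarith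
    subst hA; nlinarith
  have w1 := cvx t A d1 (2 * t * c) (t ^ 2) M h h1' (by linarith) (by linarith)
  have w2 := cvx t A d1 (2 * B * c) (B ^ 2) M h h1' (by linarith) (by linarith)
  have w3 := cvx t B d2 (2 * d1 * c) (d1 ^ 2) M h' h2' (by linarith) (by linarith)
  linarith

/-- Lemma 9: for `ψ ∈ (0, π/2)` and `0 < d2max ≤ d1max`, with `t = d1max/(2 cos ψ)`,
the function `F` attains its maximum over
`D = {(d1,d2) : 0 < d1 ≤ d1max, 0 < d2 ≤ d2max}` at `(d1max, t)` if
`d1max² + d2max² − 2·d1max·d2max·cos ψ ≤ t² ≤ d2max²`, and at `(d1max, d2max)` otherwise. -/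
theorem stmt_17 (ψ d1max d2max : ℝ) (hψ0 : 0 < ψ) (hψ : ψ < Real.pi / 2)
    (h2 : 0 < d2max) (h12 : d2max ≤ d1max) :
    ((d1max ^ 2 + d2max ^ 2 - 2 * d1max * d2max * Real.cos ψ
          ≤ (d1max / (2 * Real.cos ψ)) ^ 2 ∧
        (d1max / (2 * Real.cos ψ)) ^ 2 ≤ d2max ^ 2) →
      ((0 < d1max ∧ d1max ≤ d1max ∧ 0 < d1max / (2 * Real.cos ψ) ∧
          d1max / (2 * Real.cos ψ) ≤ d2max) ∧
        ∀ d1 d2 : ℝ, 0 < d1 → d1 ≤ d1max → 0 < d2 → d2 ≤ d2max →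
          minSqDist ψ d1 d2 ≤ minSqDist ψ d1max (d1max / (2 * Real.cos ψ)))) ∧
    (¬(d1max ^ 2 + d2max ^ 2 - 2 * d1max * d2max * Real.cos ψ
          ≤ (d1max / (2 * Real.cos ψ)) ^ 2 ∧
        (d1max / (2 * Real.cos ψ)) ^ 2 ≤ d2max ^ 2) →
      ∀ d1 d2 : ℝ, 0 < d1 → d1 ≤ d1max → 0 < d2 → d2 ≤ d2max →
        minSqDist ψ d1 d2 ≤ minSqDist ψ d1max d2max) := by
  have hc : 0 < Real.cos ψ := Real.cos_pos_of_mem_Ioo ⟨by linarith, hψ⟩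
  have hA0 : 0 < d1max := h2.trans_le h12
  have ht : 0 < d1max / (2 * Real.cos ψ) := by positivity
  have hA : d1max = 2 * Real.cos ψ * (d1max / (2 * Real.cos ψ)) := by field_simp
  generalize d1max / (2 * Real.cos ψ) = t at *
  constructor
  · rintro ⟨ha, hb⟩
    have htB : t ≤ d2max := by
      by_contra hh
      nlinarith
    refine ⟨⟨hA0, le_rfl, ht, htB⟩, fun d1 d2 h1 h1' h3 h3' => ?_⟩
    have e : minSqDist ψ d1max t = t ^ 2 := by
      unfold minSqDist
      have e1 : d1max ^ 2 + t ^ 2 - 2 * d1max * t * Real.cos ψ = t ^ 2 := by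
        linear_combination d1max * hA
      rw [e1, min_self, min_eq_right]
      have := htB.trans h12
      gcongr
    rw [e]
    exact key ψ d1max d2max t _ d1 d2 ht hA htB h12 le_rfl ha h1 h1' h3 h3'
  · intro hn d1 d2 h1 h1' h3 h3'
    have hBA : d2max ^ 2 ≤ d1max ^ 2 := by gcongr
    have e1 : d1max ^ 2 + d2max ^ 2 - 2 * d1max * d2max * Real.cos ψ
        = d2max ^ 2 + 2 * Real.cos ψ * d1max * (t - d2max) := by
      linear_combination d1max * hA
    have hp : 0 < 2 * Real.cos ψ * d1max := by positivity
    rcases le_total d2max t with h | h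
    · have : minSqDist ψ d1max d2max = d2max ^ 2 := by
        unfold minSqDist
        rw [min_eq_left (a := d2max ^ 2), min_eq_right hBA]
        rw [e1]; nlinarith
      rw [this]
      exact (min_le_right _ _).trans ((min_le_left _ _).trans (by gcongr))
    · have hle : d1max ^ 2 + d2max ^ 2 - 2 * d1max * d2max * Real.cos ψ ≤ d2max ^ 2 := by
        rw [e1]; nlinarith
      have : minSqDist ψ d1max d2max
          = d1max ^ 2 + d2max ^ 2 - 2 * d1max * d2max * Real.cos ψ := by
        unfold minSqDist
        rw [min_eq_right hle, min_eq_right (hle.trans hBA)]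
      rw [this]
      refine key ψ d1max d2max t _ d1 d2 ht hA h h12 ?_ le_rfl h1 h1' h3 h3'
      by_contra hh
      exact hn ⟨(not_le.1 hh).le, by gcongr⟩
end
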